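/- For every integer d ≥ 3, the counts of Proposition 2.2 satisfy the degeneration relation N(d) = N₁(d) + 20·a(d, 2d−5) + 8·a(d−1, 2d−5) + 8·e(d, 2d−5). -/

import Mathlib

/-- The factorial of an integer `n`, interpreted as `0! = 1` extended by `n! = (n.toNat)!`
(only ever applied to nonnegative integers). -/
noncomputable def zfact (n : ℤ) : ℚ := (Nat.factorial n.toNat : ℚ)

/-- `1/n!` for an integer `n`, with the convention `1/n! = 0` whenever `n < 0`. -/
noncomputable def invfact (n : ℤ) : ℚ :=
  if 0 ≤ n then (Nat.factorial n.toNat : ℚ)⁻¹ else 0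

/-- The binomial coefficient `binom(n, k)` for integers, equal to `0` when `k > n` or `k < 0`. -/
noncomputable def zbinom (n k : ℤ) : ℚ :=
  if 0 ≤ k ∧ k ≤ n then (Nat.choose n.toNat k.toNat : ℚ) else 0

/-- `a(d, g) = (2d−g−1)·g!/(d!·(g−d+1)!)` from Proposition 2.1. -/
noncomputable def aCount (d g : ℤ) : ℚ :=
  ((2 * d - g - 1 : ℤ) : ℚ) * zfact g * invfact d * invfact (g - d + 1)

/-- `b(d, g) = (2d−g−1)·(2d−g)·(2d−g+1)·g!/(d!·(g−d)!)` from Proposition 2.1. -/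
noncomputable def bCount (d g : ℤ) : ℚ :=
  ((2 * d - g - 1 : ℤ) : ℚ) * ((2 * d - g : ℤ) : ℚ) * ((2 * d - g + 1 : ℤ) : ℚ) *
    zfact g * invfact d * invfact (g - d)

/-- `c(d, g, γ) = (γ²·(2d−g) − γ)·binom(g, d)` from Proposition 2.1. -/
noncomputable def cCount (d g γ : ℤ) : ℚ :=
  (((γ : ℚ) ^ 2 * ((2 * d - g : ℤ) : ℚ) - (γ : ℚ))) * zbinom g d

/-- `e(d, g) = 8·g!/((d−3)!·(g−d+2)!) − 8·g!/(d!·(g−d−1)!)` from Proposition 2.1. -/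
noncomputable def eCount (d g : ℤ) : ℚ :=
  8 * zfact g * invfact (d - 3) * invfact (g - d + 2) -
    8 * zfact g * invfact d * invfact (g - d - 1)

/-- `N(d)`, the number of pencils of degree `d` with two unspecified triple ramification
points on a general curve of genus `2d−4` (Proposition 2.2 (2)). -/
noncomputable def Ncount (d : ℤ) : ℚ :=
  48 * (6 * (d : ℚ) ^ 2 - 28 * (d : ℚ) + 35) * zfact (2 * d - 4) * invfact d * invfact (d - 3)

/-- `N₁(d)` from Proposition 2.2 (3). -/
noncomputable def N1count (d : ℤ) : ℚ :=
  24 * (12 * (d : ℚ) ^ 3 - 92 * (d : ℚ) ^ 2 + 240 * (d : ℚ) - 215) *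
    zfact (2 * d - 4) * invfact d * invfact (d - 2)

/-- `N₂(d)` from Theorem 5.4. -/
noncomputable def N2count (d : ℤ) : ℚ :=
  6 * (40 * (d : ℚ) ^ 2 - 179 * (d : ℚ) + 212) * zfact (2 * d - 4) * invfact d * invfact (d - 3)

/-- `N₃(d)` from Theorem 5.6. -/
noncomputable def N3count (d : ℤ) : ℚ :=
  84 * ((d : ℚ) - 3) * (2 * (d : ℚ) ^ 2 - 10 * (d : ℚ) + 13) *
    zfact (2 * d - 4) * invfact d * invfact (d - 2)

/-- The overall constant `K(d) = 2·(2d−6)!/(d!·(d−3)!)` of Theorem 1. -/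
noncomputable def Kconst (d : ℤ) : ℚ := 2 * zfact (2 * d - 6) * invfact d * invfact (d - 3)

/-- The `λ`-coefficient `A(d) = K(d)·24·(36d⁴−36d³−640d²+1885d−1475)` of Theorem 1. -/
noncomputable def Acoeff (d : ℤ) : ℚ :=
  Kconst d * (24 * (36 * (d : ℚ) ^ 4 - 36 * (d : ℚ) ^ 3 - 640 * (d : ℚ) ^ 2 +
    1885 * (d : ℚ) - 1475))

/-- The `δ₀`-coefficient `B₀(d) = K(d)·(144d⁴−528d³−298d²+3049d−2940)` of Theorem 1. -/
noncomputable def B0coeff (d : ℤ) : ℚ :=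
  Kconst d * (144 * (d : ℚ) ^ 4 - 528 * (d : ℚ) ^ 3 - 298 * (d : ℚ) ^ 2 +
    3049 * (d : ℚ) - 2940)

/-- The `δᵢ`-coefficient `Bᵢ(d) = K(d)·12·i·(2d−3−i)·(36d³−156d²+180d−5)`, `i ≥ 1`,
of Theorem 1. -/
noncomputable def Bcoeff (d i : ℤ) : ℚ :=
  Kconst d * (12 * (i : ℚ) * (2 * (d : ℚ) - 3 - (i : ℚ)) *
    (36 * (d : ℚ) ^ 3 - 156 * (d : ℚ) ^ 2 + 180 * (d : ℚ) - 5))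

/-!
The recursions `(n + 1)! = (n + 1) n!` and `1 / (n - 1)! = n / n!` (the latter valid for every
integer `n`, since at `n = 0` it reads `1 / (-1)! = 0`) turn each of the five counts into a
polynomial in `d` times the common factor `(2d-5)! / (d! (d-2)!)`. The relation thereby reduces to
an identity between polynomials.
-/

theorem zfact_add_one {n : ℤ} (hn : 0 ≤ n) : zfact (n + 1) = (n + 1) * zfact n := by
  lift n to ℕ using hn
  simp only [zfact, Int.toNat_natCast_add_one, Int.toNat_natCast, Nat.factorial_succ]
  push_cast
  rfl

theorem invfact_sub_one (n : ℤ) : invfact (n - 1) = n * invfact n := by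
  rcases lt_trichotomy n 0 with hneg | rfl | hpos
  · rw [invfact, invfact, if_neg (by omega), if_neg (by omega), mul_zero]
  · simp [invfact]
  · obtain ⟨k, rfl⟩ : ∃ k : ℕ, n = k + 1 := ⟨(n - 1).toNat, by omega⟩
    rw [add_sub_cancel_right, invfact, invfact, if_pos (by omega), if_pos (by omega),
      Int.toNat_natCast, Int.toNat_natCast_add_one, Nat.factorial_succ]
    push_cast
    field_simp

theorem invfact_sub_natCast (n : ℤ) (k : ℕ) :
    invfact (n - k) = (∏ i ∈ Finset.range k, ((n : ℚ) - i)) * invfact n := by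
  induction k with
  | zero => simp
  | succ k ih =>
    rw [Nat.cast_succ, ← sub_sub, invfact_sub_one, ih, Finset.prod_range_succ]
    push_cast
    ring

/-- The quantity `(2d-5)! / (d! (d-2)!)`, of which every count in the degeneration relation is a
polynomial multiple. The denominator has `(d-2)!` rather than the `(d-3)!` of `N(d)`, so that the
multiplier of `N₁(d)` is a polynomial too. -/
noncomputable def commonFactor (d : ℤ) : ℚ :=
  zfact (2 * d - 5) * invfact d * invfact (d - 2)

theorem zfact_two_mul_sub_four {d : ℤ} (hd : 3 ≤ d) :
    zfact (2 * d - 4) = (2 * d - 4) * zfact (2 * d - 5) := by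
  rw [show 2 * d - 4 = 2 * d - 5 + 1 by ring, zfact_add_one (by omega)]
  push_cast
  ring

theorem invfact_sub_three_eq_mul_invfact_sub_two (d : ℤ) :
    invfact (d - 3) = (d - 2) * invfact (d - 2) := by
  rw [show d - 3 = d - 2 - 1 by ring, invfact_sub_one]
  push_cast
  rfl

theorem Ncount_eq_mul_commonFactor {d : ℤ} (hd : 3 ≤ d) :
    Ncount d = 48 * (6 * d ^ 2 - 28 * d + 35) * (2 * d - 4) * (d - 2) * commonFactor d := by
  rw [Ncount, commonFactor, zfact_two_mul_sub_four hd, invfact_sub_three_eq_mul_invfact_sub_two]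
  ring

theorem N1count_eq_mul_commonFactor {d : ℤ} (hd : 3 ≤ d) :
    N1count d =
      24 * (12 * d ^ 3 - 92 * d ^ 2 + 240 * d - 215) * (2 * d - 4) * commonFactor d := by
  rw [N1count, commonFactor, zfact_two_mul_sub_four hd]
  ring

theorem aCount_eq_mul_commonFactor (d : ℤ) :
    aCount d (2 * d - 5) = 4 * (d - 2) * (d - 3) * commonFactor d := by
  have invfact_sub_four : invfact (d - 4) = (d - 2) * (d - 3) * invfact (d - 2) := by
    rw [show d - 4 = d - 2 - (2 : ℕ) by push_cast; ring, invfact_sub_natCast]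
    simp only [Finset.prod_range_succ, Finset.prod_range_zero]
    push_cast
    ring
  rw [aCount, commonFactor, show 2 * d - 5 - d + 1 = d - 4 by ring, invfact_sub_four]
  push_cast
  ring

theorem aCount_sub_one_eq_mul_commonFactor (d : ℤ) :
    aCount (d - 1) (2 * d - 5) = 2 * d * (d - 2) * commonFactor d := by
  rw [aCount, commonFactor, show 2 * d - 5 - (d - 1) + 1 = d - 3 by ring, invfact_sub_one,
    invfact_sub_three_eq_mul_invfact_sub_two]
  push_cast
  ring

theorem invfact_sub_three_mul_self (d : ℤ) :
    invfact (d - 3) * invfact (d - 3) =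
      d * (d - 1) * (d - 2) ^ 2 * (invfact d * invfact (d - 2)) := by
  have invfact_sub_three : invfact (d - 3) = d * (d - 1) * (d - 2) * invfact d := by
    rw [show d - 3 = d - (3 : ℕ) by push_cast; ring, invfact_sub_natCast]
    simp only [Finset.prod_range_succ, Finset.prod_range_zero]
    push_cast
    ring
  calc invfact (d - 3) * invfact (d - 3)
      = (d * (d - 1) * (d - 2) * invfact d) * ((d - 2) * invfact (d - 2)) := by
        rw [← invfact_sub_three, ← invfact_sub_three_eq_mul_invfact_sub_two]
    _ = d * (d - 1) * (d - 2) ^ 2 * (invfact d * invfact (d - 2)) := by ring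

theorem eCount_eq_mul_commonFactor (d : ℤ) :
    eCount d (2 * d - 5) =
      8 * (d * (d - 1) * (d - 2) ^ 2 - (d - 2) * (d - 3) * (d - 4) * (d - 5)) *
        commonFactor d := by
  have invfact_sub_six :
      invfact (d - 6) = (d - 2) * (d - 3) * (d - 4) * (d - 5) * invfact (d - 2) := by
    rw [show d - 6 = d - 2 - (4 : ℕ) by push_cast; ring, invfact_sub_natCast]
    simp only [Finset.prod_range_succ, Finset.prod_range_zero]
    push_cast
    ring
  rw [eCount, commonFactor, show 2 * d - 5 - d + 2 = d - 3 by ring,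
    show 2 * d - 5 - d - 1 = d - 6 by ring, mul_assoc (8 * zfact _) (invfact (d - 3)),
    invfact_sub_three_mul_self, invfact_sub_six]
  ring

/-- the degeneration relation of Proposition 2.2 (3), for every integer `d ≥ 3`:
`N(d) = N₁(d) + 20·a(d, 2d−5) + 8·a(d−1, 2d−5) + 8·e(d, 2d−5)`. -/
theorem N_to_N1_relation (d : ℤ) (hd : 3 ≤ d) :
    Ncount d = N1count d + 20 * aCount d (2 * d - 5) + 8 * aCount (d - 1) (2 * d - 5) +
      8 * eCount d (2 * d - 5) := by
  rw [Ncount_eq_mul_commonFactor hd, N1count_eq_mul_commonFactor hd, aCount_eq_mul_commonFactor,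
    aCount_sub_one_eq_mul_commonFactor, eCount_eq_mul_commonFactor]
  ring
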